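/- Let ρ be a log-concave probability density on ℝⁿ and let 0 < δ < 1. Let ν_δ be the probability measure on ℝⁿ whose density e^{−ψ_δ} is proportional to (ρ * γ_δ)(x) · e^{−δ|x|²/2}, where γ_δ is the centered Gaussian density with covariance δ·Id and * denotes convolution. Then e^{−ψ_δ} is smooth and positive on ℝⁿ and for every x ∈ ℝⁿ, δ·Id ≤ ∇²ψ_δ(x) ≤ (δ + 1/δ)·Id in the sense of symmetric matrices. -/

import Mathlib

open MeasureTheory Real
open scoped ENNReal RealInnerProductSpace

noncomputable section

abbrev Euc (n : ℕ) := EuclideanSpace ℝ (Fin n)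

/-- A nonnegative function `g` is log-concave: `g(ax+by) ≥ g(x)^a g(y)^b`. -/
def IsLogConcaveFun {n : ℕ} (g : Euc n → ℝ) : Prop :=
  (∀ x, 0 ≤ g x) ∧
  ∀ x y : Euc n, ∀ a b : ℝ, 0 ≤ a → 0 ≤ b → a + b = 1 →
    g x ^ a * g y ^ b ≤ g (a • x + b • y)

def IsLogConcaveMeasure {n : ℕ} (μ : Measure (Euc n)) : Prop :=
  ∃ ρ : Euc n → ℝ, Measurable ρ ∧ IsLogConcaveFun ρ ∧
    μ = volume.withDensity (fun x => ENNReal.ofReal (ρ x))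

def poincareSet {n : ℕ} (μ : Measure (Euc n)) : Set ℝ :=
  {C : ℝ | 0 ≤ C ∧ ∀ f : Euc n → ℝ, LocallyLipschitz f →
    Integrable (fun x => ‖gradient f x‖ ^ 2) μ →
    ∫ x, f x ^ 2 ∂μ - (∫ x, f x ∂μ) ^ 2 ≤ C * ∫ x, ‖gradient f x‖ ^ 2 ∂μ}

def poincareConst {n : ℕ} (μ : Measure (Euc n)) : ℝ := sInf (poincareSet μ)

def covMatrix {n : ℕ} (μ : Measure (Euc n)) : Matrix (Fin n) (Fin n) ℝ :=
  Matrix.of fun i j => ∫ x, x i * x j ∂μ - (∫ x, x i ∂μ) * (∫ x, x j ∂μ)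

def opNorm {n : ℕ} (M : Matrix (Fin n) (Fin n) ℝ) : ℝ :=
  ‖Matrix.toEuclideanCLM (𝕜 := ℝ) M‖

def IsIsotropic {n : ℕ} (μ : Measure (Euc n)) : Prop :=
  (∫ x, x ∂μ) = 0 ∧ ∀ i j, ∫ x, x i * x j ∂μ = if i = j then 1 else 0

def UniformlyLogConcave {n : ℕ} (t : ℝ) (μ : Measure (Euc n)) : Prop :=
  ∃ g : Euc n → ℝ, Measurable g ∧ IsLogConcaveFun g ∧
    μ = volume.withDensity (fun x => ENNReal.ofReal (Real.exp (-t * ‖x‖ ^ 2 / 2) * g x))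

def IsRegularPotential {n : ℕ} (ψ : Euc n → ℝ) : Prop :=
  ContDiff ℝ (⊤ : ℕ∞) ψ ∧
  (∃ ε : ℝ, 0 < ε ∧ ∀ x v : Euc n,
    ε * ‖v‖ ^ 2 ≤ iteratedFDeriv ℝ 2 ψ x ![v, v] ∧
    iteratedFDeriv ℝ 2 ψ x ![v, v] ≤ ε⁻¹ * ‖v‖ ^ 2) ∧
  (∀ m : ℕ, ∃ C : ℝ, ∃ k : ℕ, ∀ x, ‖iteratedFDeriv ℝ m ψ x‖ ≤ C * (1 + ‖x‖) ^ k)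

def IsRegularMeasure {n : ℕ} (μ : Measure (Euc n)) (ψ : Euc n → ℝ) : Prop :=
  IsRegularPotential ψ ∧ μ = volume.withDensity (fun x => ENNReal.ofReal (Real.exp (-ψ x)))

def IsTempered {n : ℕ} (ρ : Euc n → ℝ) (f : Euc n → ℝ) : Prop :=
  ContDiff ℝ (⊤ : ℕ∞) f ∧ ∀ m : ℕ, ∃ C : ℝ, 0 < C ∧ ∃ a : ℝ, 0 < a ∧ ∀ x,
    ‖iteratedFDeriv ℝ m f x‖ ≤ C / Real.sqrt (ρ x) * Real.exp (-a * ‖x‖)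

def lap {n : ℕ} (f : Euc n → ℝ) (x : Euc n) : ℝ :=
  ∑ i, iteratedFDeriv ℝ 2 f x ![EuclideanSpace.single i (1:ℝ), EuclideanSpace.single i (1:ℝ)]

def Lop {n : ℕ} (ψ u : Euc n → ℝ) (x : Euc n) : ℝ :=
  lap u x - ⟪gradient ψ x, gradient u x⟫

def gaussDensity (n : ℕ) (s : ℝ) (x : Euc n) : ℝ :=
  (2 * π * s) ^ (-(n : ℝ) / 2) * Real.exp (-‖x‖ ^ 2 / (2 * s))

def gaussMeasure (n : ℕ) (s : ℝ) : Measure (Euc n) :=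
  volume.withDensity fun x => ENNReal.ofReal (gaussDensity n s x)

def tiltZ {n : ℕ} (ρ : Euc n → ℝ) (t : ℝ) (θ : Euc n) : ℝ :=
  ∫ x, Real.exp (⟪θ, x⟫ - t * ‖x‖ ^ 2 / 2) * ρ x

def tiltDensity {n : ℕ} (ρ : Euc n → ℝ) (t : ℝ) (θ : Euc n) (x : Euc n) : ℝ :=
  Real.exp (⟪θ, x⟫ - t * ‖x‖ ^ 2 / 2) * ρ x / tiltZ ρ t θ

def tiltMeasure {n : ℕ} (ρ : Euc n → ℝ) (t : ℝ) (θ : Euc n) : Measure (Euc n) :=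
  volume.withDensity fun x => ENNReal.ofReal (tiltDensity ρ t θ x)

def varD {n : ℕ} (p : Euc n → ℝ) (f : Euc n → ℝ) : ℝ :=
  (∫ x, f x ^ 2 * p x) - (∫ x, f x * p x) ^ 2

end

/-!
Let `u = ρ * γ_s`. It is log-concave by the Prékopa–Leindler inequality. Completing the square in
`γ_s (x - y)` shows that `e^{|x|²/(2s)} u` is a Laplace transform of a positive measure with
finite exponential moments, hence smooth, and log-convex by Hölder's inequality. The potential
`ψ = -log u + t|x|²/2 + const` therefore has both `ψ - t|x|²/2` and `(t + 1/s)|x|²/2 - ψ` convex,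
which is the two-sided bound on its Hessian. Prékopa–Leindler itself reduces to dimension one by
Fubini, where it is the Brunn–Minkowski inequality for the level sets integrated over all heights.
-/

section BrunnMinkowski

open scoped Pointwise

theorem volume_add_volume_le_volume_add_of_isCompact {K L : Set ℝ} (hK : IsCompact K)
    (hL : IsCompact L) (hK₀ : K.Nonempty) (hL₀ : L.Nonempty) :
    volume K + volume L ≤ volume (K + L) := by
  obtain ⟨m, hmK, hm⟩ := hK.exists_isGreatest hK₀
  obtain ⟨l, hlL, hl⟩ := hL.exists_isLeast hL₀
  have h_inter : (l +ᵥ K) ∩ (m +ᵥ L) ⊆ {m + l} := by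
    rintro _ ⟨⟨x, hx, rfl⟩, y, hy, hxy⟩
    have := hm hx
    have := hl hy
    simp only [vadd_eq_add, Set.mem_singleton_iff] at hxy ⊢
    linarith
  have h_disj : AEDisjoint volume (l +ᵥ K) (m +ᵥ L) := measure_mono_null h_inter (by simp)
  have h_union : (l +ᵥ K) ∪ (m +ᵥ L) ⊆ K + L := by
    rintro _ (⟨x, hx, rfl⟩ | ⟨y, hy, rfl⟩)
    · exact ⟨x, hx, l, hlL, add_comm x l⟩
    · exact ⟨m, hmK, y, hy, rfl⟩
  calc volume K + volume L = volume (l +ᵥ K) + volume (m +ᵥ L) := by simp only [measure_vadd]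
    _ = volume ((l +ᵥ K) ∪ (m +ᵥ L)) :=
      (measure_union₀ (hL.vadd m).measurableSet.nullMeasurableSet h_disj).symm
    _ ≤ volume (K + L) := measure_mono h_union

theorem volume_add_volume_le_volume_add {A B : Set ℝ} (hA : MeasurableSet A)
    (hB : MeasurableSet B) (hA₀ : A.Nonempty) (hB₀ : B.Nonempty) :
    volume A + volume B ≤ volume (A + B) := by
  obtain ⟨x, hx⟩ := hA₀
  obtain ⟨y, hy⟩ := hB₀
  simp only [hA.measure_eq_iSup_isCompact volume, hB.measure_eq_iSup_isCompact volume, iSup_and']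
  refine ENNReal.biSup_add_biSup_le' ⟨∅, Set.empty_subset _, isCompact_empty⟩
    ⟨∅, Set.empty_subset _, isCompact_empty⟩ fun K ⟨hKA, hK⟩ L ⟨hLB, hL⟩ ↦ ?_
  calc volume K + volume L ≤ volume (insert x K) + volume (insert y L) := by
        gcongr <;> exact Set.subset_insert _ _
    _ ≤ volume (insert x K + insert y L) :=
        volume_add_volume_le_volume_add_of_isCompact (hK.insert x) (hL.insert y)
          (Set.insert_nonempty _ _) (Set.insert_nonempty _ _)
    _ ≤ volume (A + B) :=
        measure_mono (Set.add_subset_add (Set.insert_subset hx hKA) (Set.insert_subset hy hLB))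

theorem smul_volume_add_smul_volume_le_volume {a b : ℝ} (ha : 0 < a) (hb : 0 < b) {A B C : Set ℝ}
    (hA : MeasurableSet A) (hB : MeasurableSet B) (hA₀ : A.Nonempty) (hB₀ : B.Nonempty)
    (hC : a • A + b • B ⊆ C) :
    ENNReal.ofReal a * volume A + ENNReal.ofReal b * volume B ≤ volume C := by
  calc ENNReal.ofReal a * volume A + ENNReal.ofReal b * volume B
      = volume (a • A) + volume (b • B) := by
        simp [Measure.addHaar_smul, abs_of_pos ha, abs_of_pos hb]
    _ ≤ volume (a • A + b • B) :=
        volume_add_volume_le_volume_add (hA.const_smul₀ a) (hB.const_smul₀ b) hA₀.smul_set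
          hB₀.smul_set
    _ ≤ volume C := measure_mono hC

end BrunnMinkowski

section PrekopaLeindler

theorem lintegral_eq_lintegral_Ioi_meas_ofReal_lt {α : Type*} [MeasurableSpace α] {μ : Measure α}
    [SFinite μ] {f : α → ℝ≥0∞} (hf : Measurable f) :
    ∫⁻ x, f x ∂μ = ∫⁻ t in Set.Ioi (0 : ℝ), μ {x | ENNReal.ofReal t < f x} := by
  have h_slice (c : ℝ≥0∞) :
      volume.restrict (Set.Ioi 0) {t : ℝ | ENNReal.ofReal t < c} = c := by
    rw [Measure.restrict_apply (measurableSet_lt (by fun_prop) measurable_const)]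
    induction c with
    | top => simp
    | coe c =>
      have : {t : ℝ | ENNReal.ofReal t < c} ∩ Set.Ioi 0 = Set.Ioo 0 (c : ℝ) := by
        ext t
        simp +contextual [and_comm, ENNReal.ofReal_lt_coe_iff, le_of_lt]
      simp [this]
  have hs : MeasurableSet {p : α × ℝ | ENNReal.ofReal p.2 < f p.1} :=
    measurableSet_lt (by fun_prop) (by fun_prop)
  calc ∫⁻ x, f x ∂μ
      = μ.prod (volume.restrict (Set.Ioi 0)) {p : α × ℝ | ENNReal.ofReal p.2 < f p.1} := by
        rw [Measure.prod_apply hs]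
        exact lintegral_congr fun x ↦ (h_slice (f x)).symm
    _ = ∫⁻ t in Set.Ioi (0 : ℝ), μ {x | ENNReal.ofReal t < f x} := Measure.prod_apply_symm hs

theorem lintegral_eq_iSup_lintegral_min_natCast {α : Type*} [MeasurableSpace α] {μ : Measure α}
    {f : α → ℝ≥0∞} (hf : Measurable f) : ∫⁻ x, f x ∂μ = ⨆ N : ℕ, ∫⁻ x, min (f x) N ∂μ := by
  have h_mono : Monotone fun (N : ℕ) x ↦ min (f x) N := fun M N hMN x ↦ by
    dsimp only
    gcongr
  rw [← lintegral_iSup (fun N ↦ hf.min measurable_const) h_mono]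
  refine lintegral_congr fun x ↦ ?_
  rw [← inf_iSup_eq, ENNReal.iSup_natCast, inf_top_eq]

theorem ennreal_geom_mean_le_arith_mean2_weighted {a b : ℝ} (ha : 0 < a) (hb : 0 < b)
    (hab : a + b = 1) (x y : ℝ≥0∞) :
    x ^ a * y ^ b ≤ ENNReal.ofReal a * x + ENNReal.ofReal b * y := by
  have hpq : a⁻¹.HolderConjugate b⁻¹ := Real.holderConjugate_iff.2
    ⟨(one_lt_inv₀ ha).2 (by linarith), by simpa using hab⟩
  calc x ^ a * y ^ b
      ≤ (x ^ a) ^ a⁻¹ / ENNReal.ofReal a⁻¹ + (y ^ b) ^ b⁻¹ / ENNReal.ofReal b⁻¹ :=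
        ENNReal.young_inequality _ _ hpq
    _ = ENNReal.ofReal a * x + ENNReal.ofReal b * y := by
        simp [ENNReal.rpow_rpow_inv, ha.ne', hb.ne', ENNReal.ofReal_inv_of_pos, ha, hb,
          div_eq_mul_inv, mul_comm]

open scoped Pointwise in
theorem smul_setOf_lt_add_smul_setOf_lt_subset {E : Type*} [AddCommMonoid E] [Module ℝ E] {a b : ℝ}
    (ha : 0 < a) (hb : 0 < b) (hab : a + b = 1) {f g h : E → ℝ≥0∞}
    (H : ∀ x y, f x ^ a * g y ^ b ≤ h (a • x + b • y)) (s : ℝ≥0∞) :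
    a • {x | s < f x} + b • {x | s < g x} ⊆ {x | s < h x} := by
  rintro _ ⟨_, ⟨x, hx, rfl⟩, _, ⟨y, hy, rfl⟩, rfl⟩
  calc s = s ^ a * s ^ b := by
        rw [← ENNReal.rpow_add_of_nonneg _ _ ha.le hb.le, hab, ENNReal.rpow_one]
    _ < f x ^ a * g y ^ b :=
      ENNReal.mul_lt_mul (ENNReal.rpow_lt_rpow hx ha) (ENNReal.rpow_lt_rpow hy hb)
    _ ≤ h (a • x + b • y) := H x y

theorem lintegral_add_lintegral_le_of_iSup_eq_one {a b : ℝ} (ha : 0 < a) (hb : 0 < b)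
    (hab : a + b = 1) {f g h : ℝ → ℝ≥0∞} (hf : Measurable f) (hg : Measurable g)
    (hh : Measurable h) (hf₁ : ⨆ x, f x = 1) (hg₁ : ⨆ x, g x = 1)
    (H : ∀ x y, f x ^ a * g y ^ b ≤ h (a • x + b • y)) :
    ENNReal.ofReal a * (∫⁻ x, f x) + ENNReal.ofReal b * (∫⁻ x, g x) ≤ ∫⁻ x, h x := by
  have hm {u : ℝ → ℝ≥0∞} (hu : Measurable u) (s : ℝ≥0∞) : MeasurableSet {x | s < u x} :=
    measurableSet_lt measurable_const hu
  have h_nonempty {u : ℝ → ℝ≥0∞} (hu : ⨆ x, u x = 1) {s : ℝ≥0∞} (hs : s < 1) :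
      {x | s < u x}.Nonempty := lt_iSup_iff.1 (hs.trans_eq hu.symm)
  have h_empty {u : ℝ → ℝ≥0∞} (hu : ⨆ x, u x = 1) {s : ℝ≥0∞} (hs : 1 ≤ s) :
      {x | s < u x} = ∅ :=
    Set.eq_empty_of_forall_notMem fun x hx ↦ (hx.trans_le ((le_iSup u x).trans hu.le)).not_ge hs
  have h_level (s : ℝ≥0∞) : ENNReal.ofReal a * volume {x | s < f x} +
      ENNReal.ofReal b * volume {x | s < g x} ≤ volume {x | s < h x} := by
    rcases lt_or_ge s 1 with hs | hs
    · exact smul_volume_add_smul_volume_le_volume ha hb (hm hf s) (hm hg s) (h_nonempty hf₁ hs)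
        (h_nonempty hg₁ hs) (smul_setOf_lt_add_smul_setOf_lt_subset ha hb hab H s)
    · simp [h_empty hf₁ hs, h_empty hg₁ hs]
  simp only [lintegral_eq_lintegral_Ioi_meas_ofReal_lt, hf, hg, hh]
  rw [← lintegral_const_mul' _ _ ENNReal.ofReal_ne_top,
    ← lintegral_const_mul' _ _ ENNReal.ofReal_ne_top]
  exact (le_lintegral_add _ _).trans (lintegral_mono fun t ↦ h_level _)

theorem rpow_lintegral_mul_rpow_lintegral_le_of_iSup_ne_top {a b : ℝ} (ha : 0 < a) (hb : 0 < b)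
    (hab : a + b = 1) {f g h : ℝ → ℝ≥0∞} (hf : Measurable f) (hg : Measurable g)
    (hh : Measurable h) (hf_top : ⨆ x, f x ≠ ∞) (hg_top : ⨆ x, g x ≠ ∞)
    (H : ∀ x y, f x ^ a * g y ^ b ≤ h (a • x + b • y)) :
    (∫⁻ x, f x) ^ a * (∫⁻ x, g x) ^ b ≤ ∫⁻ x, h x := by
  set F := ⨆ x, f x
  set G := ⨆ x, g x
  rcases eq_or_ne F 0 with hF₀ | hF₀
  · simp [ENNReal.iSup_eq_zero.1 hF₀, ha]
  rcases eq_or_ne G 0 with hG₀ | hG₀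
  · simp [ENNReal.iSup_eq_zero.1 hG₀, hb]
  set c := F ^ a * G ^ b
  have hc₀ : c ≠ 0 := by simp [c, hF₀, hG₀, hf_top, hg_top]
  have hc_top : c ≠ ∞ := by finiteness
  have h_div (p q : ℝ≥0∞) : (p / F) ^ a * (q / G) ^ b = p ^ a * q ^ b / c := by
    rw [ENNReal.div_rpow_of_nonneg _ _ ha.le, ENNReal.div_rpow_of_nonneg _ _ hb.le,
      ENNReal.mul_div_mul_comm (.inr (by finiteness)) (.inl (by finiteness))]
  -- Brunn–Minkowski needs the level sets of `f` and `g` to be nonempty at the same heights, which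
  -- normalising both suprema to `1` achieves.
  have h_scaled : ENNReal.ofReal a * (∫⁻ x, f x / F) + ENNReal.ofReal b * (∫⁻ x, g x / G)
      ≤ ∫⁻ x, h x / c :=
    lintegral_add_lintegral_le_of_iSup_eq_one ha hb hab (hf.div_const F) (hg.div_const G)
      (hh.div_const c) (by rw [← ENNReal.iSup_div, ENNReal.div_self hF₀ hf_top])
      (by rw [← ENNReal.iSup_div, ENNReal.div_self hG₀ hg_top]) fun x y ↦ by
        rw [h_div]
        gcongr
        exact H x y
  simp only [div_eq_mul_inv, lintegral_mul_const _ hf, lintegral_mul_const _ hg,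
    lintegral_mul_const _ hh] at h_scaled
  rw [← ENNReal.mul_le_mul_iff_left (ENNReal.inv_ne_zero.2 hc_top) (ENNReal.inv_ne_top.2 hc₀),
    ← div_eq_mul_inv, ← h_div]
  exact (ennreal_geom_mean_le_arith_mean2_weighted ha hb hab _ _).trans h_scaled

/-- The Prékopa–Leindler inequality as a property of the measure `μ`, which products and linear
images of measures inherit. Only the nontrivial weights `a, b > 0` are included. -/
def PrekopaLeindler {E : Type*} [AddCommMonoid E] [Module ℝ E] [MeasurableSpace E]
    (μ : Measure E) : Prop :=
  ∀ ⦃a b : ℝ⦄, 0 < a → 0 < b → a + b = 1 → ∀ ⦃f g h : E → ℝ≥0∞⦄, Measurable f → Measurable g →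
    Measurable h → (∀ x y, f x ^ a * g y ^ b ≤ h (a • x + b • y)) →
      (∫⁻ x, f x ∂μ) ^ a * (∫⁻ x, g x ∂μ) ^ b ≤ ∫⁻ x, h x ∂μ

namespace PrekopaLeindler

theorem volume_real : PrekopaLeindler (volume : Measure ℝ) := by
  intro a b ha hb hab f g h hf hg hh H
  have h_rpow {p : ℝ} (hp : 0 < p) {u : ℝ → ℝ≥0∞} (hu : Measurable u) :
      (∫⁻ x, u x) ^ p = ⨆ N : ℕ, (∫⁻ x, min (u x) N) ^ p := by
    rw [lintegral_eq_iSup_lintegral_min_natCast hu]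
    exact (ENNReal.orderIsoRpow p hp).map_iSup _
  have h_top (u : ℝ → ℝ≥0∞) (N : ℕ) : ⨆ x, min (u x) N ≠ ∞ :=
    ne_top_of_le_ne_top (ENNReal.natCast_ne_top N) (iSup_le fun x ↦ min_le_right _ _)
  rw [h_rpow ha hf, h_rpow hb hg, ENNReal.iSup_mul]
  simp only [ENNReal.mul_iSup]
  refine iSup₂_le fun M N ↦ ?_
  refine rpow_lintegral_mul_rpow_lintegral_le_of_iSup_ne_top ha hb hab (hf.min measurable_const)
    (hg.min measurable_const) hh (h_top f M) (h_top g N) fun x y ↦ le_trans ?_ (H x y)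
  gcongr <;> exact min_le_left _ _

variable {E F : Type*} [AddCommMonoid E] [Module ℝ E] [MeasurableSpace E] {μ : Measure E}
  [AddCommMonoid F] [Module ℝ F] [MeasurableSpace F] {ν : Measure F}

theorem prod [SFinite ν] (hμ : PrekopaLeindler μ) (hν : PrekopaLeindler ν) :
    PrekopaLeindler (μ.prod ν) := by
  intro a b ha hb hab f g h hf hg hh H
  simp only [lintegral_prod _ hf.aemeasurable, lintegral_prod _ hg.aemeasurable,
    lintegral_prod _ hh.aemeasurable]
  refine hμ ha hb hab hf.lintegral_prod_right' hg.lintegral_prod_right' hh.lintegral_prod_right'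
    fun x y ↦ ?_
  exact hν ha hb hab (by fun_prop) (by fun_prop) (by fun_prop) fun s t ↦ H (x, s) (y, t)

theorem of_measurePreserving (hμ : PrekopaLeindler μ) (L : E →ₗ[ℝ] F)
    (hL : MeasurePreserving L μ ν) : PrekopaLeindler ν := by
  intro a b ha hb hab f g h hf hg hh H
  rw [← hL.lintegral_comp hf, ← hL.lintegral_comp hg, ← hL.lintegral_comp hh]
  have hL' := hL.measurable
  refine hμ ha hb hab (by fun_prop) (by fun_prop) (by fun_prop) fun x y ↦ ?_
  rw [map_add, map_smul, map_smul]
  exact H (L x) (L y)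

theorem volume_pi (n : ℕ) : PrekopaLeindler (volume : Measure (Fin n → ℝ)) := by
  induction n with
  | zero =>
    intro a b _ _ _ f g h _ _ _ H
    simp only [MeasureTheory.volume_pi, Measure.pi_of_empty (x := 0), lintegral_dirac]
    convert H 0 0
  | succ n ih =>
    have h_cons : ⇑(Fin.consLinearEquiv ℝ fun _ : Fin (n + 1) ↦ ℝ) =
        (MeasurableEquiv.piFinSuccAbove (fun _ ↦ ℝ) 0).symm := by
      ext x i
      simp [MeasurableEquiv.piFinSuccAbove]
    exact (volume_real.prod ih).of_measurePreserving
      (Fin.consLinearEquiv ℝ fun _ ↦ ℝ).toLinearMap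
      (h_cons ▸ (volume_preserving_piFinSuccAbove (fun _ ↦ ℝ) 0).symm)

theorem volume {E : Type*} [NormedAddCommGroup E] [InnerProductSpace ℝ E] [FiniteDimensional ℝ E]
    [MeasurableSpace E] [BorelSpace E] : PrekopaLeindler (volume : Measure E) :=
  (volume_pi (Module.finrank ℝ E)).of_measurePreserving
    ((stdOrthonormalBasis ℝ E).repr.symm.toLinearEquiv.toLinearMap ∘ₗ
      (WithLp.linearEquiv 2 ℝ (Fin (Module.finrank ℝ E) → ℝ)).symm.toLinearMap)
    ((stdOrthonormalBasis ℝ E).repr.symm.measurePreserving.comp (PiLp.volume_preserving_toLp _))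

end PrekopaLeindler

end PrekopaLeindler

section LogConcave

variable {n : ℕ}

theorem isLogConcaveFun_iff_concaveOn_log {f : Euc n → ℝ} (hf : ∀ x, 0 < f x) :
    IsLogConcaveFun f ↔ ConcaveOn ℝ Set.univ fun x ↦ log (f x) := by
  have h_log (x y : Euc n) (a b : ℝ) : f x ^ a * f y ^ b ≤ f (a • x + b • y) ↔
      a • log (f x) + b • log (f y) ≤ log (f (a • x + b • y)) := by
    have hx := rpow_pos_of_pos (hf x) a
    have hy := rpow_pos_of_pos (hf y) b
    rw [← log_le_log_iff (mul_pos hx hy) (hf _), log_mul hx.ne' hy.ne', log_rpow (hf x),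
      log_rpow (hf y), smul_eq_mul, smul_eq_mul]
  simp only [IsLogConcaveFun, ConcaveOn, fun x ↦ (hf x).le, h_log, convex_univ, Set.mem_univ,
    forall_const, true_and]

theorem isLogConcaveFun_integral {E : Type*} [AddCommMonoid E] [Module ℝ E] [MeasurableSpace E]
    {μ : Measure E} (hμ : PrekopaLeindler μ) {k : Euc n → E → ℝ} (hk₀ : ∀ x y, 0 ≤ k x y)
    (hk_meas : ∀ x, Measurable (k x)) (hk_int : ∀ x, Integrable (k x) μ)
    (hk : ∀ x₁ x₂ y₁ y₂, ∀ a b : ℝ, 0 ≤ a → 0 ≤ b → a + b = 1 →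
      k x₁ y₁ ^ a * k x₂ y₂ ^ b ≤ k (a • x₁ + b • x₂) (a • y₁ + b • y₂)) :
    IsLogConcaveFun fun x ↦ ∫ y, k x y ∂μ := by
  have h_nonneg (x : Euc n) : 0 ≤ ∫ y, k x y ∂μ := integral_nonneg (hk₀ x)
  refine ⟨h_nonneg, fun x₁ x₂ a b ha hb hab ↦ ?_⟩
  rcases ha.eq_or_lt with rfl | ha
  · simp [show b = 1 by linarith]
  rcases hb.eq_or_lt with rfl | hb
  · simp [show a = 1 by linarith]
  have h_ofReal (x : Euc n) :
      ENNReal.ofReal (∫ y, k x y ∂μ) = ∫⁻ y, ENNReal.ofReal (k x y) ∂μ :=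
    ofReal_integral_eq_lintegral_ofReal (hk_int x) (.of_forall (hk₀ x))
  have h_rpow {r s : ℝ} (hr : 0 ≤ r) (hs : 0 ≤ s) : ENNReal.ofReal r ^ a * ENNReal.ofReal s ^ b =
      ENNReal.ofReal (r ^ a * s ^ b) := by
    rw [ENNReal.ofReal_rpow_of_nonneg hr ha.le, ENNReal.ofReal_rpow_of_nonneg hs hb.le,
      ENNReal.ofReal_mul (rpow_nonneg hr a)]
  rw [← ENNReal.ofReal_le_ofReal_iff (h_nonneg _), ← h_rpow (h_nonneg _) (h_nonneg _), h_ofReal,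
    h_ofReal, h_ofReal]
  refine hμ ha hb hab (hk_meas _).ennreal_ofReal (hk_meas _).ennreal_ofReal
    (hk_meas _).ennreal_ofReal fun y₁ y₂ ↦ ?_
  rw [h_rpow (hk₀ _ _) (hk₀ _ _)]
  exact ENNReal.ofReal_le_ofReal (hk x₁ x₂ y₁ y₂ a b ha.le hb.le hab)

theorem isLogConcaveFun_integral_mul_sub {f g : Euc n → ℝ} (hf : IsLogConcaveFun f)
    (hg : IsLogConcaveFun g) (hf_meas : Measurable f) (hg_meas : Measurable g)
    (hfg : ∀ x, Integrable fun y ↦ f y * g (x - y)) :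
    IsLogConcaveFun fun x ↦ ∫ y, f y * g (x - y) := by
  refine isLogConcaveFun_integral .volume (fun x y ↦ mul_nonneg (hf.1 y) (hg.1 _))
    (fun x ↦ by fun_prop) hfg fun x₁ x₂ y₁ y₂ a b ha hb hab ↦ ?_
  calc (f y₁ * g (x₁ - y₁)) ^ a * (f y₂ * g (x₂ - y₂)) ^ b
      = f y₁ ^ a * f y₂ ^ b * (g (x₁ - y₁) ^ a * g (x₂ - y₂) ^ b) := by
        rw [mul_rpow (hf.1 _) (hg.1 _), mul_rpow (hf.1 _) (hg.1 _)]
        ring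
    _ ≤ f (a • y₁ + b • y₂) * g (a • (x₁ - y₁) + b • (x₂ - y₂)) :=
        mul_le_mul (hf.2 y₁ y₂ a b ha hb hab) (hg.2 _ _ a b ha hb hab)
          (mul_nonneg (rpow_nonneg (hg.1 _) _) (rpow_nonneg (hg.1 _) _)) (hf.1 _)
    _ = f (a • y₁ + b • y₂) * g (a • x₁ + b • x₂ - (a • y₁ + b • y₂)) := by
        rw [smul_sub, smul_sub, sub_add_sub_comm]

end LogConcave

section LaplaceIntegral

universe u v

variable {Ω : Type*} [MeasurableSpace Ω] {μ : Measure Ω} {E : Type u} {F : Type v}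
  [NormedAddCommGroup E] [NormedSpace ℝ E] [NormedAddCommGroup F] [NormedSpace ℝ F]
  {L : Ω → StrongDual ℝ E} {f : Ω → F}

/-- The Laplace transform of the vector-valued measure `f • μ` along the family of linear forms
`L`. Letting `F` vary makes the class of these integrals closed under differentiation. -/
noncomputable def laplaceIntegral (μ : Measure Ω) (L : Ω → StrongDual ℝ E) (f : Ω → F) (x : E) :
    F :=
  ∫ ω, exp (L ω x) • f ω ∂μ

/-- All exponential moments of `L` under `‖f‖ • μ` are finite, so that `laplaceIntegral μ L f` and
all its formal derivatives converge absolutely everywhere. -/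
structure HasExponentialMoments (μ : Measure Ω) (L : Ω → StrongDual ℝ E) (f : Ω → F) : Prop where
  aestronglyMeasurable_form : AEStronglyMeasurable L μ
  aestronglyMeasurable : AEStronglyMeasurable f μ
  integrable : ∀ R : ℝ, Integrable (fun ω ↦ exp (R * ‖L ω‖) * ‖f ω‖) μ

theorem norm_exp_smul_le (ℓ : StrongDual ℝ E) (v : F) {x : E} {R : ℝ} (hx : ‖x‖ ≤ R) :
    ‖exp (ℓ x) • v‖ ≤ exp (R * ‖ℓ‖) * ‖v‖ := by
  rw [norm_smul, norm_of_nonneg (exp_pos _).le]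
  gcongr
  calc ℓ x ≤ ‖ℓ x‖ := le_norm_self _
    _ ≤ ‖ℓ‖ * ‖x‖ := ℓ.le_opNorm x
    _ ≤ R * ‖ℓ‖ := by rw [mul_comm]; gcongr

namespace HasExponentialMoments

theorem integrable_exp_smul (h : HasExponentialMoments μ L f) (x : E) :
    Integrable (fun ω ↦ exp (L ω x) • f ω) μ :=
  (h.integrable ‖x‖).mono'
    ((continuous_exp.comp_aestronglyMeasurable
      (h.aestronglyMeasurable_form.apply_continuousLinearMap x)).smul h.aestronglyMeasurable)
    (.of_forall fun _ ↦ norm_exp_smul_le _ _ le_rfl)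

theorem aestronglyMeasurable_smulRight (h : HasExponentialMoments μ L f) :
    AEStronglyMeasurable (fun ω ↦ (L ω).smulRight (f ω)) μ :=
  (ContinuousLinearMap.smulRightL ℝ E F).aestronglyMeasurable_comp₂ h.aestronglyMeasurable_form
    h.aestronglyMeasurable

theorem smulRight (h : HasExponentialMoments μ L f) :
    HasExponentialMoments μ L fun ω ↦ (L ω).smulRight (f ω) where
  aestronglyMeasurable_form := h.aestronglyMeasurable_form
  aestronglyMeasurable := h.aestronglyMeasurable_smulRight
  integrable R := by
    refine (h.integrable (R + 1)).mono' ((continuous_exp.comp_aestronglyMeasurable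
      (h.aestronglyMeasurable_form.norm.const_mul R)).mul h.aestronglyMeasurable_smulRight.norm)
      (.of_forall fun ω ↦ ?_)
    rw [norm_of_nonneg (by positivity), ContinuousLinearMap.norm_smulRight_apply, add_mul,
        exp_add, one_mul, ← mul_assoc]
    gcongr
    exact (lt_add_one _).le.trans (add_one_le_exp _)

theorem hasFDerivAt_laplaceIntegral (h : HasExponentialMoments μ L f) (x : E) :
    HasFDerivAt (laplaceIntegral μ L f)
      (laplaceIntegral μ L (fun ω ↦ (L ω).smulRight (f ω)) x) x := by
  refine hasFDerivAt_integral_of_dominated_of_fderiv_le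
    (F' := fun y ω ↦ exp (L ω y) • (L ω).smulRight (f ω)) (Metric.ball_mem_nhds x one_pos)
    (.of_forall fun y ↦ (h.integrable_exp_smul y).1) (h.integrable_exp_smul x)
    (h.smulRight.integrable_exp_smul x).1 (.of_forall fun ω y hy ↦
      norm_exp_smul_le (L ω) ((L ω).smulRight (f ω)) (norm_lt_of_mem_ball hy).le)
    (h.smulRight.integrable (‖x‖ + 1)) (.of_forall fun ω y _ ↦ ?_)
  convert (L ω).hasFDerivAt.exp.smul_const (f ω) using 1
  ext v
  simp [mul_smul]

-- The codomain lives in `Type (max u v)` so that the induction can replace `F` by `E →L[ℝ] F`.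
theorem contDiff_laplaceIntegral_nat {F : Type max u v} [NormedAddCommGroup F] [NormedSpace ℝ F]
    {f : Ω → F} (h : HasExponentialMoments μ L f) (m : ℕ) :
    ContDiff ℝ m (laplaceIntegral μ L f) := by
  induction m generalizing F with
  | zero =>
    exact contDiff_zero.2 (continuous_iff_continuousAt.2 fun x ↦
      (h.hasFDerivAt_laplaceIntegral x).continuousAt)
  | succ m ih =>
    exact_mod_cast contDiff_succ_iff_hasFDerivAt.2
      ⟨_, ih h.smulRight, h.hasFDerivAt_laplaceIntegral⟩

theorem contDiff_laplaceIntegral {F : Type max u v} [NormedAddCommGroup F] [NormedSpace ℝ F]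
    {f : Ω → F} (h : HasExponentialMoments μ L f) :
    ContDiff ℝ (⊤ : ℕ∞) (laplaceIntegral μ L f) :=
  contDiff_infty.2 h.contDiff_laplaceIntegral_nat

end HasExponentialMoments

theorem integral_rpow_mul_rpow_le {f g : Ω → ℝ} (hf₀ : 0 ≤ f) (hg₀ : 0 ≤ g)
    (hf : Integrable f μ) (hg : Integrable g μ) {a b : ℝ} (ha : 0 ≤ a) (hb : 0 ≤ b)
    (hab : a + b = 1) :
    ∫ ω, f ω ^ a * g ω ^ b ∂μ ≤ (∫ ω, f ω ∂μ) ^ a * (∫ ω, g ω ∂μ) ^ b := by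
  have hF : 0 ≤ ∫ ω, f ω ∂μ := integral_nonneg hf₀
  have hG : 0 ≤ ∫ ω, g ω ∂μ := integral_nonneg hg₀
  rw [integral_eq_lintegral_of_nonneg_ae (.of_forall fun ω ↦
      mul_nonneg (rpow_nonneg (hf₀ ω) a) (rpow_nonneg (hg₀ ω) b))
      ((hf.1.aemeasurable.pow_const a).mul (hg.1.aemeasurable.pow_const b)).aestronglyMeasurable]
  refine ENNReal.toReal_le_of_le_ofReal (by positivity) ?_
  rw [ENNReal.ofReal_mul (by positivity), ← ENNReal.ofReal_rpow_of_nonneg hF ha,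
    ← ENNReal.ofReal_rpow_of_nonneg hG hb,
    ofReal_integral_eq_lintegral_ofReal hf (.of_forall hf₀),
    ofReal_integral_eq_lintegral_ofReal hg (.of_forall hg₀)]
  refine (lintegral_congr fun ω ↦ ?_).trans_le (ENNReal.lintegral_mul_norm_pow_le
    hf.1.aemeasurable.ennreal_ofReal hg.1.aemeasurable.ennreal_ofReal ha hb hab)
  rw [ENNReal.ofReal_mul (rpow_nonneg (hf₀ ω) a), ENNReal.ofReal_rpow_of_nonneg (hf₀ ω) ha,
    ENNReal.ofReal_rpow_of_nonneg (hg₀ ω) hb]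

theorem convexOn_log_laplaceIntegral {f : Ω → ℝ} (h : HasExponentialMoments μ L f) (hf : 0 ≤ f)
    (h_pos : ∀ x, 0 < laplaceIntegral μ L f x) :
    ConvexOn ℝ Set.univ fun x ↦ log (laplaceIntegral μ L f x) := by
  refine ⟨convex_univ, fun x _ y _ a b ha hb hab ↦ ?_⟩
  have hx := rpow_pos_of_pos (h_pos x) a
  have hy := rpow_pos_of_pos (h_pos y) b
  rw [smul_eq_mul, smul_eq_mul, ← log_rpow (h_pos x), ← log_rpow (h_pos y), ← log_mul hx.ne' hy.ne']
  refine log_le_log (h_pos _) ?_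
  have h_split (ω : Ω) : exp (L ω (a • x + b • y)) • f ω =
      (exp (L ω x) • f ω) ^ a * (exp (L ω y) • f ω) ^ b := by
    have hfω := hf ω
    have h_f : f ω = f ω ^ a * f ω ^ b := by
      rw [← rpow_add_of_nonneg hfω ha hb, hab, rpow_one]
    simp only [smul_eq_mul]
    rw [mul_rpow (exp_pos _).le hfω, mul_rpow (exp_pos _).le hfω, ← exp_mul, ← exp_mul,
      mul_mul_mul_comm, ← h_f, ← exp_add, map_add, map_smul, map_smul, smul_eq_mul, smul_eq_mul,
      mul_comm a, mul_comm b]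
  calc laplaceIntegral μ L f (a • x + b • y)
      = ∫ ω, (exp (L ω x) • f ω) ^ a * (exp (L ω y) • f ω) ^ b ∂μ := by
        simp only [laplaceIntegral, h_split]
    _ ≤ laplaceIntegral μ L f x ^ a * laplaceIntegral μ L f y ^ b :=
      integral_rpow_mul_rpow_le (fun ω ↦ smul_nonneg (exp_pos _).le (hf ω))
        (fun ω ↦ smul_nonneg (exp_pos _).le (hf ω)) (h.integrable_exp_smul x)
        (h.integrable_exp_smul y) ha hb hab

end LaplaceIntegral

section StrongConvexity

theorem le_deriv_deriv_of_strongConvexOn {m : ℝ} {φ : ℝ → ℝ} (hφ : StrongConvexOn Set.univ m φ)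
    (hφ_diff : Differentiable ℝ φ) {t : ℝ} (ht : DifferentiableAt ℝ (deriv φ) t) :
    m ≤ deriv (deriv φ) t := by
  have h_deriv (r : ℝ) : HasDerivAt (fun r ↦ φ r - m / 2 * ‖r‖ ^ 2) (deriv φ r - m * r) r := by
    simp only [norm_eq_abs, sq_abs]
    exact (hφ_diff r).hasDerivAt.fun_sub
      (((hasDerivAt_pow 2 r).const_mul (m / 2)).congr_deriv (by push_cast; ring))
  have h_mono : Monotone fun r ↦ deriv φ r - m * r := by
    have h_convex := strongConvexOn_iff_convex.1 hφ
    have h := h_convex.monotoneOn_deriv fun r _ ↦ (h_deriv r).differentiableAt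
    rwa [monotoneOn_univ, funext fun r ↦ (h_deriv r).deriv] at h
  have h := ht.hasDerivAt.sub ((hasDerivAt_id t).const_mul m)
  have h_nonneg : 0 ≤ deriv (deriv φ) t - m * 1 := h.deriv ▸ h_mono.deriv_nonneg
  linarith

variable {E : Type*} [NormedAddCommGroup E] [NormedSpace ℝ E] {m : ℝ} {ψ : E → ℝ}

theorem strongConvexOn_univ_comp_add_smul (hψ : StrongConvexOn Set.univ m ψ) (x v : E) :
    StrongConvexOn Set.univ (m * ‖v‖ ^ 2) fun r : ℝ ↦ ψ (x + r • v) := by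
  refine ⟨convex_univ, fun r _ r' _ a b ha hb hab ↦ ?_⟩
  have h := hψ.2 (Set.mem_univ (x + r • v)) (Set.mem_univ (x + r' • v)) ha hb hab
  have h_point : a • (x + r • v) + b • (x + r' • v) = x + (a • r + b • r') • v := by
    have : x = (a + b) • x := by rw [hab, one_smul]
    nth_rw 3 [this]
    simp only [smul_eq_mul]
    module
  have h_norm : ‖x + r • v - (x + r' • v)‖ = ‖r - r'‖ * ‖v‖ := by
    rw [add_sub_add_left_eq_sub, ← sub_smul, norm_smul]
  rw [h_point, h_norm] at h
  convert h using 3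
  ring

theorem mul_sq_norm_le_iteratedFDeriv_two_of_strongConvexOn (hψ : StrongConvexOn Set.univ m ψ)
    (hψ_diff : ContDiff ℝ 2 ψ) (x v : E) : m * ‖v‖ ^ 2 ≤ iteratedFDeriv ℝ 2 ψ x ![v, v] := by
  have h_line (r : ℝ) : HasDerivAt (fun r : ℝ ↦ x + r • v) v r := by
    simpa using ((hasDerivAt_id r).smul_const v).const_add x
  have h_first (r : ℝ) : HasDerivAt (fun r : ℝ ↦ ψ (x + r • v)) (fderiv ℝ ψ (x + r • v) v) r :=
    (hψ_diff.differentiable two_ne_zero _).hasFDerivAt.comp_hasDerivAt r (h_line r)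
  have h_second : HasDerivAt (deriv fun r : ℝ ↦ ψ (x + r • v))
      (iteratedFDeriv ℝ 2 ψ x ![v, v]) 0 := by
    have h_fderiv : HasFDerivAt (fderiv ℝ ψ) (fderiv ℝ (fderiv ℝ ψ) x) (x + (0 : ℝ) • v) := by
      rw [zero_smul, add_zero]
      exact ((hψ_diff.fderiv_right (m := 1) le_rfl).differentiable one_ne_zero x).hasFDerivAt
    rw [funext fun r ↦ (h_first r).deriv, iteratedFDeriv_two_apply]
    have h := h_fderiv.comp_hasDerivAt (0 : ℝ) (h_line 0)
    simpa using h.clm_apply (hasDerivAt_const (0 : ℝ) v)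
  rw [← h_second.deriv]
  exact le_deriv_deriv_of_strongConvexOn (strongConvexOn_univ_comp_add_smul hψ x v)
    (fun r ↦ (h_first r).differentiableAt) h_second.differentiableAt

theorem iteratedFDeriv_two_le_mul_sq_norm_of_strongConvexOn_neg
    (hψ : StrongConvexOn Set.univ (-m) (-ψ)) (hψ_diff : ContDiff ℝ 2 ψ) (x v : E) :
    iteratedFDeriv ℝ 2 ψ x ![v, v] ≤ m * ‖v‖ ^ 2 := by
  have h := mul_sq_norm_le_iteratedFDeriv_two_of_strongConvexOn hψ hψ_diff.neg x v
  rw [iteratedFDeriv_neg] at h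
  simp only [Pi.neg_apply, neg_apply] at h
  linarith

end StrongConvexity

section GaussianConvolution

variable {n : ℕ} {s : ℝ}

theorem gaussDensity_pos (hs : 0 < s) (x : Euc n) : 0 < gaussDensity n s x := by
  unfold gaussDensity
  positivity

theorem gaussDensity_le_gaussDensity_zero (hs : 0 < s) (x : Euc n) :
    gaussDensity n s x ≤ gaussDensity n s 0 := by
  unfold gaussDensity
  gcongr
  simp

theorem continuous_gaussDensity : Continuous (gaussDensity n s) := by
  unfold gaussDensity
  fun_prop

theorem integrable_gaussDensity (hs : 0 < s) : Integrable (gaussDensity n s) := by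
  have h_exp : Integrable fun x : Euc n ↦ exp (-(2 * s)⁻¹ * ‖x‖ ^ 2) := by
    refine .of_integral_ne_zero ?_
    rw [GaussianFourier.integral_rexp_neg_mul_sq_norm (by positivity)]
    positivity
  refine (h_exp.const_mul ((2 * π * s) ^ (-(n : ℝ) / 2))).congr (.of_forall fun x ↦ ?_)
  simp only [gaussDensity]
  ring_nf

theorem isLogConcaveFun_gaussDensity (hs : 0 < s) : IsLogConcaveFun (gaussDensity n s) := by
  have h_log : (fun x ↦ log (gaussDensity n s x)) =
      fun x ↦ log ((2 * π * s) ^ (-(n : ℝ) / 2)) - (2 * s)⁻¹ • ‖x‖ ^ 2 := by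
    ext x
    rw [gaussDensity, log_mul (by positivity) (exp_pos _).ne', log_exp, smul_eq_mul]
    ring
  rw [isLogConcaveFun_iff_concaveOn_log (gaussDensity_pos hs), h_log]
  exact (concaveOn_const _ convex_univ).sub
    ((convexOn_univ_norm.pow (fun _ _ ↦ norm_nonneg _) 2).smul (by positivity))

theorem gaussDensity_sub (hs : s ≠ 0) (x y : Euc n) : gaussDensity n s (x - y) =
    exp (-(‖x‖ ^ 2 / (2 * s))) * (exp ((s⁻¹ • innerSL ℝ y) x) * gaussDensity n s y) := by
  have h_exp : exp (-‖x - y‖ ^ 2 / (2 * s)) =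
      exp (-(‖x‖ ^ 2 / (2 * s))) * (exp ((s⁻¹ • innerSL ℝ y) x) * exp (-‖y‖ ^ 2 / (2 * s))) := by
    rw [← exp_add, ← exp_add, norm_sub_sq_real, smul_apply, innerSL_apply_apply,
      real_inner_comm, smul_eq_mul]
    congr 1
    field_simp
    ring
  rw [gaussDensity, gaussDensity, h_exp]
  ring

theorem exp_mul_norm_mul_gaussDensity_le (hs : 0 < s) (R : ℝ) (y : Euc n) :
    exp (R * ‖y‖) * gaussDensity n s y ≤ exp (R ^ 2 * s / 2) * gaussDensity n s 0 := by
  have h_exponent : R * ‖y‖ + -‖y‖ ^ 2 / (2 * s) ≤ R ^ 2 * s / 2 := by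
    have h_sq : R ^ 2 * s / 2 - (R * ‖y‖ + -‖y‖ ^ 2 / (2 * s)) = (R * s - ‖y‖) ^ 2 / (2 * s) := by
      field_simp
      ring
    have : 0 ≤ (R * s - ‖y‖) ^ 2 / (2 * s) := by positivity
    linarith
  calc exp (R * ‖y‖) * gaussDensity n s y
      = exp (R * ‖y‖ + -‖y‖ ^ 2 / (2 * s)) * gaussDensity n s 0 := by
        simp only [gaussDensity, exp_add, norm_zero, ne_eq, OfNat.ofNat_ne_zero, not_false_eq_true,
          zero_pow, neg_zero, zero_div, exp_zero, mul_one]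
        ring
    _ ≤ exp (R ^ 2 * s / 2) * gaussDensity n s 0 := by
        have := gaussDensity_pos hs (0 : Euc n)
        gcongr

/-- The convolution `ρ * γ_s` of a function with the centred Gaussian density of covariance
`s • Id`. -/
noncomputable def gaussConv (ρ : Euc n → ℝ) (s : ℝ) (x : Euc n) : ℝ :=
  ∫ y, ρ y * gaussDensity n s (x - y)

variable {ρ : Euc n → ℝ}

theorem integrable_mul_gaussDensity_sub (hs : 0 < s) (hρ : Integrable ρ) (x : Euc n) :
    Integrable fun y ↦ ρ y * gaussDensity n s (x - y) := by
  refine hρ.mul_bdd (c := gaussDensity n s 0)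
    (continuous_gaussDensity.comp (continuous_const.sub continuous_id)).aestronglyMeasurable
    (.of_forall fun y ↦ ?_)
  rw [norm_of_nonneg (gaussDensity_pos hs _).le]
  exact gaussDensity_le_gaussDensity_zero hs _

theorem gaussConv_pos (hs : 0 < s) (hρ₀ : 0 ≤ ρ) (hρ : 0 < ∫ x, ρ x) (x : Euc n) :
    0 < gaussConv ρ s x := by
  have hρ_int : Integrable ρ := .of_integral_ne_zero hρ.ne'
  rw [integral_pos_iff_support_of_nonneg hρ₀ hρ_int] at hρ
  rw [gaussConv, integral_pos_iff_support_of_nonneg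
    (fun y ↦ mul_nonneg (hρ₀ y) (gaussDensity_pos hs _).le)
    (integrable_mul_gaussDensity_sub hs hρ_int x)]
  convert hρ using 2
  ext y
  simp [(gaussDensity_pos hs (x - y)).ne']

theorem integrable_gaussConv (hs : 0 < s) (hρ : Integrable ρ) : Integrable (gaussConv ρ s) :=
  hρ.integrable_convolution (ContinuousLinearMap.mul ℝ ℝ) (integrable_gaussDensity hs)

theorem hasExponentialMoments_mul_gaussDensity (hs : 0 < s) (hρ : Integrable ρ) :
    HasExponentialMoments volume (fun y ↦ s⁻¹ • innerSL ℝ y) fun y ↦ ρ y * gaussDensity n s y where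
  aestronglyMeasurable_form :=
    ((innerSL ℝ).continuous.const_smul s⁻¹).aestronglyMeasurable
  aestronglyMeasurable := hρ.1.mul continuous_gaussDensity.aestronglyMeasurable
  integrable R := by
    have h_exp : Continuous fun y : Euc n ↦ exp (R * ‖s⁻¹ • innerSL ℝ y‖) := by fun_prop
    refine (hρ.norm.const_mul (exp ((R * s⁻¹) ^ 2 * s / 2) * gaussDensity n s 0)).mono'
      (h_exp.aestronglyMeasurable.mul
        (hρ.1.mul continuous_gaussDensity.aestronglyMeasurable).norm) (.of_forall fun y ↦ ?_)
    rw [norm_of_nonneg (by positivity), norm_smul, innerSL_apply_norm, norm_mul,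
      norm_of_nonneg (gaussDensity_pos hs y).le, norm_of_nonneg (inv_pos.2 hs).le]
    calc exp (R * (s⁻¹ * ‖y‖)) * (‖ρ y‖ * gaussDensity n s y)
        = exp (R * s⁻¹ * ‖y‖) * gaussDensity n s y * ‖ρ y‖ := by rw [← mul_assoc R]; ring
      _ ≤ exp ((R * s⁻¹) ^ 2 * s / 2) * gaussDensity n s 0 * ‖ρ y‖ :=
        mul_le_mul_of_nonneg_right (exp_mul_norm_mul_gaussDensity_le hs _ y) (norm_nonneg _)

theorem gaussConv_eq_exp_mul_laplaceIntegral (hs : s ≠ 0) (x : Euc n) :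
    gaussConv ρ s x = exp (-(‖x‖ ^ 2 / (2 * s))) *
      laplaceIntegral volume (fun y ↦ s⁻¹ • innerSL ℝ y) (fun y ↦ ρ y * gaussDensity n s y) x := by
  rw [gaussConv, laplaceIntegral, ← integral_const_mul]
  refine integral_congr_ae (.of_forall fun y ↦ ?_)
  simp only [gaussDensity_sub hs, smul_eq_mul]
  ring

theorem contDiff_gaussConv (hs : 0 < s) (hρ : Integrable ρ) :
    ContDiff ℝ (⊤ : ℕ∞) (gaussConv ρ s) := by
  rw [funext (gaussConv_eq_exp_mul_laplaceIntegral hs.ne')]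
  exact ((contDiff_norm_sq ℝ).div_const _).neg.exp.mul
    (hasExponentialMoments_mul_gaussDensity hs hρ).contDiff_laplaceIntegral

theorem concaveOn_log_gaussConv (hs : 0 < s) (hρ_lc : IsLogConcaveFun ρ) (hρ_meas : Measurable ρ)
    (hρ : 0 < ∫ x, ρ x) : ConcaveOn ℝ Set.univ fun x ↦ log (gaussConv ρ s x) :=
  (isLogConcaveFun_iff_concaveOn_log (gaussConv_pos hs hρ_lc.1 hρ)).1 <|
    isLogConcaveFun_integral_mul_sub hρ_lc (isLogConcaveFun_gaussDensity hs) hρ_meas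
      continuous_gaussDensity.measurable
      (integrable_mul_gaussDensity_sub hs (.of_integral_ne_zero hρ.ne'))

theorem convexOn_log_gaussConv_add_sq_norm (hs : 0 < s) (hρ₀ : 0 ≤ ρ) (hρ : 0 < ∫ x, ρ x) :
    ConvexOn ℝ Set.univ fun x ↦ log (gaussConv ρ s x) + ‖x‖ ^ 2 / (2 * s) := by
  have h_eq := gaussConv_eq_exp_mul_laplaceIntegral (ρ := ρ) hs.ne'
  have h_pos (x : Euc n) : 0 < laplaceIntegral volume (fun y ↦ s⁻¹ • innerSL ℝ y)
      (fun y ↦ ρ y * gaussDensity n s y) x :=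
    pos_of_mul_pos_right (h_eq x ▸ gaussConv_pos hs hρ₀ hρ x) (exp_pos _).le
  refine (convexOn_log_laplaceIntegral
    (hasExponentialMoments_mul_gaussDensity hs (.of_integral_ne_zero hρ.ne'))
    (fun y ↦ mul_nonneg (hρ₀ y) (gaussDensity_pos hs y).le) h_pos).congr fun x _ ↦ ?_
  dsimp only
  rw [h_eq, log_mul (exp_pos _).ne' (h_pos x).ne', log_exp]
  ring

end GaussianConvolution

section Regularization

variable {n : ℕ} {ρ : Euc n → ℝ} {s t : ℝ}

/-- The normalisation of `(ρ * γ_s) e^{-t|x|²/2}` to a probability density. The paper takes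
`s = t = δ`. -/
noncomputable def regularizedDensity (ρ : Euc n → ℝ) (s t : ℝ) (x : Euc n) : ℝ :=
  gaussConv ρ s x * exp (-t * ‖x‖ ^ 2 / 2) / ∫ z, gaussConv ρ s z * exp (-t * ‖z‖ ^ 2 / 2)

theorem integral_gaussConv_mul_exp_pos (hs : 0 < s) (ht : 0 ≤ t) (hρ₀ : 0 ≤ ρ)
    (hρ : 0 < ∫ x, ρ x) : 0 < ∫ x, gaussConv ρ s x * exp (-t * ‖x‖ ^ 2 / 2) := by
  have hρ_int : Integrable ρ := .of_integral_ne_zero hρ.ne'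
  have h_pos (x : Euc n) : 0 < gaussConv ρ s x * exp (-t * ‖x‖ ^ 2 / 2) :=
    mul_pos (gaussConv_pos hs hρ₀ hρ x) (exp_pos _)
  have h_exp : Continuous fun x : Euc n ↦ exp (-t * ‖x‖ ^ 2 / 2) := by fun_prop
  refine integral_pos_of_integrable_nonneg_nonzero (x := 0)
    ((contDiff_gaussConv hs hρ_int).continuous.mul h_exp) ?_ (fun x ↦ (h_pos x).le) (h_pos 0).ne'
  refine (integrable_gaussConv hs hρ_int).mul_bdd (c := 1) h_exp.aestronglyMeasurable
    (.of_forall fun x ↦ ?_)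
  rw [norm_of_nonneg (exp_pos _).le, exp_le_one_iff, neg_mul, neg_div, neg_nonpos]
  positivity

theorem contDiff_regularizedDensity (hs : 0 < s) (hρ : Integrable ρ) :
    ContDiff ℝ (⊤ : ℕ∞) (regularizedDensity ρ s t) :=
  ((contDiff_gaussConv hs hρ).mul
    ((contDiff_const.mul (contDiff_norm_sq ℝ)).div_const _).exp).div_const _

theorem regularizedDensity_pos (hs : 0 < s) (ht : 0 ≤ t) (hρ₀ : 0 ≤ ρ) (hρ : 0 < ∫ x, ρ x)
    (x : Euc n) : 0 < regularizedDensity ρ s t x :=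
  div_pos (mul_pos (gaussConv_pos hs hρ₀ hρ x) (exp_pos _))
    (integral_gaussConv_mul_exp_pos hs ht hρ₀ hρ)

theorem log_regularizedDensity (hs : 0 < s) (ht : 0 ≤ t) (hρ₀ : 0 ≤ ρ) (hρ : 0 < ∫ x, ρ x)
    (x : Euc n) : log (regularizedDensity ρ s t x) = log (gaussConv ρ s x) - t / 2 * ‖x‖ ^ 2 -
      log (∫ z, gaussConv ρ s z * exp (-t * ‖z‖ ^ 2 / 2)) := by
  have h_pos := gaussConv_pos hs hρ₀ hρ x
  rw [regularizedDensity, log_div (mul_pos h_pos (exp_pos _)).ne'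
    (integral_gaussConv_mul_exp_pos hs ht hρ₀ hρ).ne', log_mul h_pos.ne' (exp_pos _).ne', log_exp]
  ring

theorem strongConvexOn_neg_log_regularizedDensity (hs : 0 < s) (ht : 0 ≤ t)
    (hρ_lc : IsLogConcaveFun ρ) (hρ_meas : Measurable ρ) (hρ : 0 < ∫ x, ρ x) :
    StrongConvexOn Set.univ t fun x ↦ -log (regularizedDensity ρ s t x) := by
  rw [strongConvexOn_iff_convex]
  refine ((concaveOn_log_gaussConv hs hρ_lc hρ_meas hρ).neg.add_const
    (log (∫ z, gaussConv ρ s z * exp (-t * ‖z‖ ^ 2 / 2)))).congr fun x _ ↦ ?_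
  simp only [Pi.add_apply, log_regularizedDensity hs ht hρ_lc.1 hρ, Pi.neg_apply]
  ring

theorem strongConvexOn_log_regularizedDensity (hs : 0 < s) (ht : 0 ≤ t) (hρ₀ : 0 ≤ ρ)
    (hρ : 0 < ∫ x, ρ x) :
    StrongConvexOn Set.univ (-(t + 1 / s)) fun x ↦ log (regularizedDensity ρ s t x) := by
  rw [strongConvexOn_iff_convex]
  refine ((convexOn_log_gaussConv_add_sq_norm hs hρ₀ hρ).add_const
    (-log (∫ z, gaussConv ρ s z * exp (-t * ‖z‖ ^ 2 / 2)))).congr fun x _ ↦ ?_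
  simp only [Pi.add_apply, log_regularizedDensity hs ht hρ₀ hρ]
  field_simp
  ring

end Regularization

theorem regularized_density_hessian_bounds_general {n : ℕ} {ρ : Euc n → ℝ} (hρm : Measurable ρ)
    (hlc : IsLogConcaveFun ρ) (hρ : 0 < ∫ x, ρ x) {s t : ℝ} (hs : 0 < s) (ht : 0 ≤ t) :
    ContDiff ℝ (⊤ : ℕ∞) (regularizedDensity ρ s t) ∧ (∀ x, 0 < regularizedDensity ρ s t x) ∧
    ∀ x v : Euc n,
      t * ‖v‖ ^ 2 ≤ iteratedFDeriv ℝ 2 (fun x ↦ -log (regularizedDensity ρ s t x)) x ![v, v] ∧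
      iteratedFDeriv ℝ 2 (fun x ↦ -log (regularizedDensity ρ s t x)) x ![v, v] ≤
        (t + 1 / s) * ‖v‖ ^ 2 := by
  have h_smooth := contDiff_regularizedDensity (t := t) hs (.of_integral_ne_zero hρ.ne')
  have h_pos := regularizedDensity_pos hs ht hlc.1 hρ
  have h_potential : ContDiff ℝ 2 fun x ↦ -log (regularizedDensity ρ s t x) :=
    ((contDiff_infty.1 h_smooth 2).log fun x ↦ (h_pos x).ne').neg
  refine ⟨h_smooth, h_pos, fun x v ↦ ⟨?_, ?_⟩⟩
  · exact mul_sq_norm_le_iteratedFDeriv_two_of_strongConvexOn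
      (strongConvexOn_neg_log_regularizedDensity hs ht hlc hρm hρ) h_potential x v
  · refine iteratedFDeriv_two_le_mul_sq_norm_of_strongConvexOn_neg ?_ h_potential x v
    simpa only [Pi.neg_def, neg_neg] using strongConvexOn_log_regularizedDensity hs ht hlc.1 hρ

/-- Regularization of a log-concave density: the density proportional to
`(ρ * γ_δ)(x) e^{−δ|x|²/2}` is smooth and positive, and its potential `ψ_δ`
satisfies `δ·Id ≤ ∇²ψ_δ ≤ (δ + 1/δ)·Id`. -/
theorem regularized_density_hessian_bounds {n : ℕ} (ρ : Euc n → ℝ) (hρm : Measurable ρ)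
    (hlc : IsLogConcaveFun ρ) (hρ1 : (∫ x, ρ x) = 1)
    (δ : ℝ) (hδ0 : 0 < δ) (hδ1 : δ < 1)
    (Z : ℝ)
    (hZ : Z = ∫ x, (∫ y, ρ y * gaussDensity n δ (x - y)) * Real.exp (-δ * ‖x‖ ^ 2 / 2))
    (d : Euc n → ℝ)
    (hd : d = fun x =>
      (∫ y, ρ y * gaussDensity n δ (x - y)) * Real.exp (-δ * ‖x‖ ^ 2 / 2) / Z)
    (ψδ : Euc n → ℝ) (hψδ : ψδ = fun x => -Real.log (d x)) :
    ContDiff ℝ (⊤ : ℕ∞) d ∧ (∀ x, 0 < d x) ∧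
    ∀ x v : Euc n,
      δ * ‖v‖ ^ 2 ≤ iteratedFDeriv ℝ 2 ψδ x ![v, v] ∧
      iteratedFDeriv ℝ 2 ψδ x ![v, v] ≤ (δ + 1 / δ) * ‖v‖ ^ 2 := by
  subst hZ hd hψδ
  exact regularized_density_hessian_bounds_general hρm hlc (hρ1 ▸ one_pos) hδ0 hδ0.le
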